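/- The number of isomorphism classes of 3-uniform hypergraphs on 7 vertices that arise as the hypergraph of cyclic triples of some tournament on 7 vertices is exactly 247. -/

import Mathlib

/-!
The hypergraph of cyclic triples of a tournament is unchanged when all arcs are reversed, so it
depends only on the tournament up to isomorphism and converse, a relation called `Sim` here.

*At most 247 classes.* Tournaments on `n` vertices up to `Sim` are listed for `n = 0, …, 7` (there
are 1, 1, 1, 2, 3, 10, 34, 272 of them) by adding one vertex at a time: a tournament on `n + 1`
vertices restricts to one on `n` vertices, which may be assumed to be in the list, and is then
determined by the in-neighbours of the new vertex. For each listed tournament and each of the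
`2 ^ n` sets of in-neighbours, a stored permutation carries the extension, or its converse, to a
member of the next list (`Covers.succ`, `covers_seven`). Of the 272 tournaments on seven vertices,
25 have a hypergraph isomorphic to that of one of the other 247; stored permutations show this
(`extras_match`).

*At least 247 classes.* Give a vertex `a` the weight `∑ b, 2 ^ d(a, b)`, where `d(a, b)` is the
number of edges containing `a` and `b`, and sum over the edges the product of the weights of their
vertices. This isomorphism invariant (`tripleInv`, `hgInv`) takes 247 different values on the
hypergraphs of the 247 remaining tournaments (`reps_increasing`).

Tournaments and permutations are coded by natural numbers so that the finite checks are evaluated by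
the kernel with binary arithmetic.
-/

open scoped Classical

/-- `T` is a tournament on `Fin n`: each pair of distinct vertices gets
exactly one of the two arcs. -/
def IsTournament {n : ℕ} (T : Fin n → Fin n → Bool) : Prop :=
  (∀ i, T i i = false) ∧ ∀ i j : Fin n, i ≠ j → T i j = !T j i

/-- `s` is a cyclic triple of the tournament `T`: `s = {a,b,c}` for three
distinct vertices whose three arcs form a directed 3-cycle. -/
def IsCyclicTriple {n : ℕ} (T : Fin n → Fin n → Bool) (s : Finset (Fin n)) : Prop :=
  ∃ a b c : Fin n, a ≠ b ∧ a ≠ c ∧ b ≠ c ∧ s = {a, b, c} ∧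
    ((T a b = true ∧ T b c = true ∧ T c a = true) ∨
     (T b a = true ∧ T c b = true ∧ T a c = true))

/-- The 3-uniform hypergraph of cyclic triples of a tournament. -/
noncomputable def cyclicTriples {n : ℕ} (T : Fin n → Fin n → Bool) :
    Finset (Finset (Fin n)) :=
  Finset.univ.filter (IsCyclicTriple T)

/-- A 3-uniform hypergraph on 7 vertices that arises as the hypergraph of
cyclic triples of some tournament on 7 vertices. -/
def TournamentHG7 : Type :=
  {E : Finset (Finset (Fin 7)) //
    ∃ T : Fin 7 → Fin 7 → Bool, IsTournament T ∧ E = cyclicTriples T}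

/-- Two such hypergraphs are isomorphic when some permutation of the vertices
maps edges to edges and non-edges to non-edges. -/
def IsoTHG7 (E F : TournamentHG7) : Prop :=
  ∃ σ : Equiv.Perm (Fin 7), ∀ s : Finset (Fin 7), s ∈ E.1 ↔ s.image σ ∈ F.1

/-! ### Coded tournaments, isomorphism and converse -/
/-- Bit `k` of `r`, in terms of the operations on numerals that the kernel evaluates natively. -/
def bit (r k : ℕ) : Bool := Nat.beq (Nat.land (Nat.shiftRight r k) 1) 1

/-- The tournament on `{0, 1, …}` coded by `r`: for `i < j` the arc is `i → j` exactly when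
bit `8 * j + i` of `r` is set, so byte `j` of `r` lists the in-neighbours of `j` below `j`. -/
def arc (r i j : ℕ) : Bool :=
  bif Nat.blt i j then bit r (8 * j + i)
  else bif Nat.blt j i then !bit r (8 * i + j) else false

/-- The tournament coded by `r`, on the vertex set `Fin n`. -/
def tour (n r : ℕ) : Fin n → Fin n → Bool := fun i j => arc r i j

/-- `T` is isomorphic to `U` or to the converse of `U`. -/
def Sim {n : ℕ} (T U : Fin n → Fin n → Bool) : Prop :=
  ∃ σ : Equiv.Perm (Fin n), (∀ i j, T (σ i) (σ j) = U i j) ∨ ∀ i j, T (σ i) (σ j) = U j i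

/-- The Boolean conjunction of the `p k` for `k < n`. -/
def allLt (n : ℕ) (p : ℕ → Bool) : Bool :=
  Nat.rec true (fun k ih => p k && ih) n

/-- `f n`, written as a recursion on `n` so that the kernel evaluates `n` before unfolding `f`. -/
def force (n : ℕ) (f : ℕ → Bool) : Bool := Nat.rec (f 0) (fun k _ => f (Nat.succ k)) n

/-- The octal digit of `c` at position `k`; a number encodes the map `k ↦ digit c k`. -/
def digit (c k : ℕ) : ℕ := (c >>> (3 * k)) % 8

/-- Checks that `digit c` is an isomorphism from the tournament `s`, or from its converse if bit 21
of `c` is set, to the tournament `r`, on `n` vertices; `n` should be at most `7`, so that the digits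
stay below bit 21. It suffices to compare the arcs for `i < j`. -/
def matchArcs (n r c s : ℕ) : Bool :=
  allLt n fun j => force (digit c j) fun q => Nat.blt q n && allLt j fun i =>
    force (digit c i) fun p =>
      !Nat.beq p q && (arc r p q == xor (bit c 21) (arc s i j))

/-- Checks that `L` lists pairs of a tournament `r` on `n` vertices and a certificate, whose 32-bit
block number `m` shows that the extension of `r` by a vertex with set of in-neighbours `m` is
related by `Sim` to a member of the list `M`: the upper 10 bits give the position in `M`, the lower
22 bits are as in `matchArcs`. -/
def extendsTo (n : ℕ) (L : List (ℕ × ℕ)) (M : List ℕ) : Bool :=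
  L.all fun x => Nat.blt x.1 (2 ^ (8 * n)) && allLt (2 ^ n) fun m =>
    force ((x.2 >>> (32 * m)) % 2 ^ 32) fun c => force (2 ^ (8 * n) * m + x.1) fun r =>
      match M[c >>> 22]? with
      | none => false
      | some s => matchArcs (n + 1) r c s

/-- Every tournament on `n` vertices is related by `Sim` to one with its code in `L`. -/
def Covers (n : ℕ) (L : List ℕ) : Prop :=
  ∀ T : Fin n → Fin n → Bool, IsTournament T → ∃ r ∈ L, Sim T (tour n r)

lemma blt_of_lt {i j : ℕ} (h : i < j) : Nat.blt i j = true := by rwa [Nat.blt_eq]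

lemma beq_false_iff {i j : ℕ} : Nat.beq i j = false ↔ i ≠ j := by
  rw [← Bool.not_eq_true, Nat.beq_eq]

lemma allLt_iff {n : ℕ} {p : ℕ → Bool} : allLt n p = true ↔ ∀ k < n, p k = true := by
  induction n with
  | zero => simp [allLt]
  | succ n ih =>
    have : allLt (n + 1) p = (p n && allLt n p) := rfl
    rw [this, Bool.and_eq_true, ih]
    constructor
    · rintro ⟨h, h'⟩ k hk
      rcases Nat.lt_succ_iff_lt_or_eq.1 hk with h1 | rfl
      exacts [h' k h1, h]
    · exact fun h => ⟨h n (by omega), fun k hk => h k (by omega)⟩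

lemma force_eq (n : ℕ) (f : ℕ → Bool) : force n f = f n := by cases n <;> rfl

lemma bit_eq (r k : ℕ) : bit r k = r.testBit k := by
  rw [Bool.eq_iff_iff, bit, Nat.beq_eq, Nat.testBit_eq_decide_div_mod_eq, decide_eq_true_eq,
    ← Nat.shiftRight_eq_div_pow, ← Nat.and_one_is_mod]
  rfl

lemma arc_self (r i : ℕ) : arc r i i = false := by simp [arc, Nat.blt_eq]

lemma arc_swap (r : ℕ) {i j : ℕ} (h : i ≠ j) : arc r i j = !arc r j i := by
  have h2 {i j : ℕ} (h : i < j) : Nat.blt j i = false := by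
    rw [← Bool.not_eq_true, Nat.blt_eq]; exact h.not_gt
  rcases lt_or_gt_of_ne h with h | h <;> simp [arc, blt_of_lt h, h2 h]

lemma isTournament_tour (n r : ℕ) : IsTournament (tour n r) :=
  ⟨fun _ => arc_self _ _, fun _ _ h => arc_swap _ (fun h' => h (Fin.ext h'))⟩

lemma IsTournament.comp {n m : ℕ} {T : Fin n → Fin n → Bool} (hT : IsTournament T)
    {f : Fin m → Fin n} (hf : Function.Injective f) :
    IsTournament fun i j => T (f i) (f j) :=
  ⟨fun _ => hT.1 _, fun _ _ h => hT.2 _ _ (hf.ne h)⟩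

lemma IsTournament.converse {n : ℕ} {T : Fin n → Fin n → Bool} (hT : IsTournament T) :
    IsTournament fun i j => T j i :=
  ⟨fun _ => hT.1 _, fun _ _ h => hT.2 _ _ h.symm⟩

/-- Tournaments that agree on the pairs `i < j` are equal. -/
lemma IsTournament.ext_lt {n : ℕ} {T T' : Fin n → Fin n → Bool} (hT : IsTournament T)
    (hT' : IsTournament T') (h : ∀ i j, i < j → T i j = T' i j) (i j : Fin n) :
    T i j = T' i j := by
  rcases lt_trichotomy i j with h1 | rfl | h1
  · exact h i j h1
  · rw [hT.1, hT'.1]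
  · rw [hT.2 i j h1.ne', hT'.2 i j h1.ne', h j i h1]

lemma Sim.trans {n : ℕ} {T₁ T₂ T₃ : Fin n → Fin n → Bool} (h : Sim T₁ T₂) (h' : Sim T₂ T₃) :
    Sim T₁ T₃ := by
  obtain ⟨σ, h⟩ := h
  obtain ⟨τ, h'⟩ := h'
  refine ⟨τ.trans σ, ?_⟩
  simp only [Equiv.trans_apply]
  rcases h with h | h <;> rcases h' with h' | h' <;> simp only [h, h'] <;> simp

lemma sim_of_matchArcs {n r c r' : ℕ} (h : matchArcs n r c r' = true) :
    Sim (tour n r) (tour n r') := by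
  simp only [matchArcs, force_eq, allLt_iff, Bool.and_eq_true, Nat.blt_eq, beq_iff_eq,
    Bool.not_eq_true', beq_false_iff] at h
  let f : Fin n → Fin n := fun i => ⟨digit c i, (h i i.2).1⟩
  have hf : Function.Injective f := by
    intro i j hij
    have hij' : digit c i = digit c j := congrArg Fin.val hij
    rcases lt_trichotomy i j with h1 | h1 | h1
    · exact absurd hij' ((h j j.2).2 i h1).1
    · exact h1
    · exact absurd hij'.symm ((h i i.2).2 j h1).1
  let σ : Equiv.Perm (Fin n) := Equiv.ofBijective f (Finite.injective_iff_bijective.1 hf)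
  have key : ∀ i j : Fin n, i < j →
      tour n r (σ i) (σ j) = xor (bit c 21) (tour n r' i j) :=
    fun i j hij => ((h j j.2).2 i hij).2
  refine ⟨σ, ?_⟩
  have h1 := (isTournament_tour n r).comp σ.injective
  have h2 := isTournament_tour n r'
  cases hc : bit c 21 with
  | false => exact Or.inl (h1.ext_lt h2 fun i j hij => by simp [key i j hij, hc])
  | true =>
    exact Or.inr (h1.ext_lt h2.converse fun i j hij => by
      simp [key i j hij, hc, h2.2 j i (Ne.symm hij.ne)])

/-- A tournament on `n + 1` vertices is determined by its restriction to the first `n` vertices and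
by the set `m` of in-neighbours of the last vertex. -/
lemma exists_code {n r : ℕ} (hr : r < 2 ^ (8 * n)) (hn : n < 8)
    {T : Fin (n + 1) → Fin (n + 1) → Bool} (hT : IsTournament T)
    (h : ∀ i j : Fin n, T i.castSucc j.castSucc = tour n r i j) :
    ∃ m < 2 ^ n, ∀ i j, T i j = tour (n + 1) (2 ^ (8 * n) * m + r) i j := by
  refine ⟨Nat.ofBits fun i : Fin n => T i.castSucc (Fin.last n), Nat.ofBits_lt_two_pow _,
    hT.ext_lt (isTournament_tour _ _) fun i j hij => ?_⟩
  have hb : Nat.blt i j = true := blt_of_lt hij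
  simp only [tour, arc, hb, cond_true, bit_eq]
  rw [Nat.testBit_two_pow_mul_add _ hr]
  induction i using Fin.lastCases with
  | last => exact absurd hij (Fin.le_last j).not_gt
  | cast i =>
    induction j using Fin.lastCases with
    | last =>
      simp [Nat.testBit_ofBits_lt _ _ i.2]
    | cast j =>
      have hb : Nat.blt i j = true := hb
      have : 8 * (j : ℕ) + i < 8 * n := by omega
      simp [h, tour, arc, hb, this, bit_eq]

lemma Covers.succ {n : ℕ} (hn : n < 8) {L : List (ℕ × ℕ)} {M : List ℕ}
    (h : Covers n (L.map Prod.fst)) (hL : extendsTo n L M = true) : Covers (n + 1) M := by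
  -- a tournament whose restriction to `Fin n` equals a listed one is settled by its certificate
  have base : ∀ r ∈ L.map Prod.fst, ∀ T : Fin (n + 1) → Fin (n + 1) → Bool, IsTournament T →
      (∀ i j : Fin n, T i.castSucc j.castSucc = tour n r i j) →
      ∃ s ∈ M, Sim T (tour (n + 1) s) := by
    intro r hr T hT hTr
    obtain ⟨⟨r, c⟩, hx, rfl⟩ := List.mem_map.1 hr
    have h1 := List.all_eq_true.1 hL _ hx
    simp only [force_eq, Bool.and_eq_true, Nat.blt_eq, allLt_iff] at h1
    obtain ⟨m, hm, hTm⟩ := exists_code h1.1 hn hT hTr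
    have h2 := h1.2 m hm
    split at h2
    · simp at h2
    · rename_i s hs
      refine ⟨s, List.mem_of_getElem? hs, ?_⟩
      have : T = tour (n + 1) (2 ^ (8 * n) * m + r) := by funext i j; exact hTm i j
      rw [this]
      exact sim_of_matchArcs h2
  intro T hT
  obtain ⟨r, hr, σ, hσ⟩ := h _ (hT.comp (Fin.castSucc_injective n))
  -- `τ` extends `σ` by fixing the last vertex
  let f : Fin (n + 1) → Fin (n + 1) := Fin.lastCases (Fin.last n) fun i => (σ i).castSucc
  have hf1 : f (Fin.last n) = Fin.last n := by simp [f]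
  have hf2 : ∀ i : Fin n, f i.castSucc = (σ i).castSucc := by simp [f]
  have hf : Function.Injective f := by
    intro i j hij
    induction i using Fin.lastCases <;> induction j using Fin.lastCases <;>
      simp_all [Fin.castSucc_ne_last]
  let τ : Equiv.Perm (Fin (n + 1)) := Equiv.ofBijective f (Finite.injective_iff_bijective.1 hf)
  have hτ : ∀ i : Fin n, τ i.castSucc = (σ i).castSucc := hf2
  have hT' := hT.comp τ.injective
  rcases hσ with hσ | hσ
  · obtain ⟨r', hr', h'⟩ := base r hr _ hT' fun i j => by simp only [hτ]; exact hσ i j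
    exact ⟨r', hr', Sim.trans ⟨τ, Or.inl fun _ _ => rfl⟩ h'⟩
  · obtain ⟨s, hs, h₁⟩ := base r hr _ hT'.converse fun i j => by simp only [hτ]; exact hσ j i
    exact ⟨s, hs, Sim.trans ⟨τ, Or.inr fun _ _ => rfl⟩ h₁⟩

/-! ### Tournaments on at most seven vertices -/

lemma covers_zero : Covers 0 [0] :=
  fun _ _ => ⟨0, by simp, Equiv.refl _, Or.inl fun i => i.elim0⟩

/-- Codes of the tournaments on `0` vertices up to isomorphism and converse, each with its
certificate for `extendsTo 0`. The lists `level1`, …, `level6` are the analogues for `1`, …, `6`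
vertices. -/
def level0 : List (ℕ × ℕ) := [
  (0, 0)]

def level1 : List (ℕ × ℕ) := [
  (0, 4294967304)]

def level2 : List (ℕ × ℕ) := [
  (0, 5229058727417203822053289885832)]

def level3 : List (ℕ × ℕ) := [
  (0, 29413301820841500471718931284584521896773452111684464404033951968003720),
  (65536, 226185837619781976775940850665365166455779074721567173694949392682191946371)]

def level4 : List (ℕ × ℕ) := [
  (0, 41768995612973432866399722262359040095409093117930202399457390045643621357627233307684500228417139860383045581320724925573930699635626673053934569096),
  (33554688, 26228893874025000882344342649795067762925373238393938939685061774848337481733521110709964454849659596449704505553947909294388178488716690925029704077524),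
  (33554432, 52416018734145573628105407320242729971302903986791276570149531539094398060153660185820256493042531048265499724445102370615383503566010317748892124333704)]

def level5 : List (ℕ × ℕ) := [
  (0, 6046196596481435428664759841740897511258282732501038406569904036724786354962005585070738383833071094248820328714065436631595784109463892149849907866553794731479625514788747719850588822121571061121960915121597147757884421122115984491172652349681412460524424027138501926821096044783666919006863411908888200),
  (8589934848, 357158137326275646323569335289803882579598453430445448096977126207342568007503749257742801107925776514912891849137473630107467634936558590996742647631953765401878940711572781575235042689676622070765087079972431831328447333258169302136259177848694344073273067737958004220460984565061204443346023282309629213),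
  (17180000256, 708270077565572825237812135677254236795476106502191698608073044122895302928683514042053360293685375331202880987970111159921437779739882373325078211498342755438680273945895734945980037511214904467802474078969242971338947218836878500119601487889223984478827170034403095874418362411461552385880454050735113864),
  (34410070016, 1059382018009243369329115775171265043244095222200597623519244647296327874017750026917410990047474586459635122533686873295392390750683940389352149802993987703224274658332581482564442188740288890106681886233607719957821918404854036958078307625893436363745318932744272674476406913859110703867809313481665032869),
  (17179869184, 1234937988292391367486263342129725965094483911932662512924764792846706154744760662400401416262024306831880506643282646113122347028330601643681936707915463546313076821932717786701078361309951591579899413654801177885955335228913690401837709686104317995281412109211382528915528964318594525749485087100980348552),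
  (17180000512, 1586049929553558102229490654096008508270459366286696940154296676714604133281047025327300541146007637645430212889708923499479202149042063783585853618886074985835692809853556776830025108507509466157393577705945483533617657595748362698005545313467260988105084610996117087734559848205632443748185373908442055965),
  (33554432, 1937161869261482756886022038779958460516687156435680183247537606418377240157370941714051263465813112167199783319489327786839437944148908743444623779620502719085025333674013097841377116562296351766517888978004822452500592736796200854825194716734623078574033059456624613774431191707864717253517217962913703525),
  (17196777472, 3692721571398087223207202738602863638815041633656206078934128124372636913583813348856920902946804828386930208778156197268783249373445211289382696235696928039061421676239590259604302472378703847586175765807443437236342170427448838772395163916143099909935671119454449800388863000015051804492663148797960922725),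
  (12901679104, 4043833511882632917928193955908777674238190500782710618838866499253864692802417581551500512100572498145997564799892780252995458586196421185341327797224249874478165316473852886246265114163672808983763914491997588913311175125080141434785028004166298492493725387272405311013927133739336686626791774321287145221),
  (4328521728, 4570501422650326269754270133146498307502444946809086121325646004829751966883621310302793277410323121893646345459545362619152463470725098459380700505908386392351495149802983876415028698988364062631008864644310351715385441253506427521495740565575598818521319766196100388093451971792161187356308859653288109669)]

def level6 : List (ℕ × ℕ) := [
  (0, 10949295713511187463289085929059276125798006647334952793424900203393221751031318295448737612627320625220633821212025184783069813268297284743463857954057817471044471307173126066569400538795763233286253850859524073266989057785120365357071832348383431296477974716918499563633764175298810740296822338088191032098483208218022848908056018355438429611766888977173492431049285457011037174211001194572034161995527676121599980445396764786121597434160075104740620588328987339870617986280077033690933296258422580472050880339805525907175743250095585614046870219395380486591958171099884259078216961850441488904940254148584720008),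
  (2199023255808, 673700397005759974448776455084025344733779059215898778689526921965105343182918086375871887412102790985400147251409724273222154766189197203630194023804231122753243562563210520692197198545547304596275096347777567871501541634511108665549862885822214376873337217307655671324447448506901607158555006113390327657154039878969373776584649328886700219584947734266529093249663263586107964911950289458327450243463094697493424922195731194135525326533468509952320126209522982939608697443981822145642143893890841732871475124178664877098218860540554797575251343433579204660737529145374882122423609969510449581115380827151287986022),
  (4398046642176, 200306753206687339584527387541902820979316034364081872909549199131243558770437198866993999161345823987506681312388652796560760621166373887709558566272624129395477846609496544862942506059897255585739607924536788152723088268397936875862719702228955835961430291028403664789105568817003815701606290922474898538896408368798852254106212472482662654501105317226584715950152933051958918492759326130280099038172071285946074583733335569001546397414752383682009047319592806392464992916415547046066418650514466470670038048563813680333686812677826501953292159881284482643127261375643704782568573016829349204265149143447143892616),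
  (4415226576896, 7806164627764425007362297094508102532992943151154478904733435686861147768514006912038589858947475308127674163145030581039968296527479031497615265635936940414634889582621799218279938999515791122215410771238159715032665236127499534626490461705801195734490959981813673320232809121041075560066490530849828267599509592840007665251603546478975772015592000450828067822641595014705186274701354492817329234005187576072556194774808137174907361186991456361041641289872633355263584533310896429699764755050106027120075134110293305290564853263604182793275360494209901525714393993949294829073546520939804252558811483145353501415662),
  (8796160131072, 105628024460099263518551066985535675203069756410923561620236589110236665812394185953665324403897277331224187816454579105720139114622284582324097250982437897176041224819365202088537931207490482032548340553066856366852495188770822524402410350703356188261502626596610773463194083823798579520497787141331987546374869348957237121665217897087364207511717313965346730380248653329316480093785226617620849748415497243514413283430577235010632614984270418077134554862182113068407533706045496814786417476225633341768900993065099294626687374992606247695412022198089326773233477140624406994400066179357333440264914364578215413384),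
  (17617955848448, 547462091995613133394574343402433463547885817248509693589403588552546319455694628137709380738953604807641224449237135916853470233459791030743907454106692708264009270474330336893384782377894345371863672965244151033159324000599806259695981117337174131260763019295823360974048295857749987637681386029792133763597054878139276928285869451790152260234821877482663888948636750904472771584209645622754459942886387328860744855374601691240772734548561736123870070578144219627109123350657680017955199513785573708863121396329504212296630551440984670493442611311354406756974233036045328944901776065946386252753711295866442368238),
  (17617955848192, 326545058202138107670785118953040623806144519345270335648647366164175213319569432041543039905478024735342273446775484204472917643019435886089198354833685459594551998626745837246473107402678220324138049815677798795398795757859784264979765920193761118257831298602286330235706287176016951035784222931071018554350238106413372708439127497315274072038439284888013587066589294793692806303129643046253859553649974857165930501645328737311199857462452734365214081168503233543422381402931200377752153186236488942115885017746211353665842469036357572837151657362315258113974823010535305282591050835669293403784714586642206869128),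
  (8796093022208, 42508871962373879936495752375791959035848326005343617315564632183345068119791112637718696240699981533723038073317952835048847330464156033575422176343820769387677845503036808810285636624606046997442508461242857548198731761976241994633325264565922117551428744879592526952182737658761772007125782541962292074466894323973299807712876157791062389664267641862536446457857790680930033824390983818241741891205294071921633558465375863960726298754897924371871944509965731504902732511821451168934335935403204849881515486063384339114090096627189780548966188557464728207556070164717030273667092415106472352043212877972536739464),
  (4398046642432, 7869283779946184823969288177145380539706041651542168582163526115190613945493717083941826237890318717838407626782865818798772417615722558157115443168027348338111832427988158681607688585195307387575129757683764845112513553017571820436125754360106041135265186979051467839372318889111811826289643153043411129547636115850723750731950680639394332504600870870577856970575311408654683034624481019717911576652561175225024461589513218679936634183019865672521681284136988303170402705185641978062377443622334671691220250958024592483744439783404101146814732019016798351260380051490096975402415965669283277997257932282828477966182),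
  (8796160262144, 168747176957824647564246090611758467799315196339400805588651204478779091796219407211017734071664929696145429096833483169051622947196285103813590223035369766443197217391722087914010912774973846768397990708554747705438451658926283635185621322681303777765459903210682568842825669125289179720078603268500738832783091956885068366290047109269476633604010219475192812040340741393207709840011998245670135577482044754842165037492833006641443340339054481307511503304438912067496590540001018699475984979337599919234645755704515298038774526726657396004808372350387482885599146820667902455752828730217323298225029150285284165256),
  (17180000256, 7932402934178046883705770093038349565598159572648789084159789421217262077537701058162579665208579512988866258282885449805583122051788542646721108104038206113933557696778726841859263561974340549245030251307114144002504712907106019377821757074566145713098661934635170858388578159390078964309328034674777653576274069779612764445326310494722604908640608440625819328796423254823739590951209948239158504287353105067526707004867991252553639720796928652781877585096369623173866546474798011018988911324348057039382414339166191261845262085057362489126002811987131944478578421059082527226956978804572239092789267888937101236462),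
  (17179869184, 7995522086675772267730479145015340182318812261515507010214336877180501860644826296565619297601787549007493016300622345376890104217542246238735130501362547934918003492501629971922619656334685215673416110893298967229350287259263390973481035730839605454580632405941014509302320318021780265457189961679442528373267421052742973021140289120291801893911455423341602621203280210225698192014814518283469612989090942425264982784146481267737207496236663854256686031105314929936798126226762314014960627803187806633472157823202819104185570702068121915142183584092634536226001194765441847879136789487974348524202592720915166578312),
  (4402341609472, 863057854667940964813894489571640895806252636213659755989705330720240036916071929006067703192369382176458867309841080653168448588295202262424218144906664247833588111388694287080093328634879629674597133814986641660828442579242191497822944683360231590900248311510150741315537031309450549027405501064436002429678322326448447039264988114521491429932530455769296447770108426848781987167188283107440365982875222390006006230717192234099011727623380262125329889100892394387384669669939047125934468375251554038933689983870179309521021739360660008331922664215185964998099094389709416944660579469316111922854954809014406420718),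
  (6614249832704, 2188560057392051378366532087107348711108360339044770037030510090245942977602418640691154033420454478352913152716355364690416553819744087589152721867465784786816461816647704949617955159731685992963533880975411545458337735384406215040152244788490809031456803861787631837908634720126144291636763785407122189148836707890943090859694860453625643121502803619282713924400978977922359251507448144175870863191719331762070035582321745724229355078212083562393062890128542148226855849496705680066854104134201458534478932183372502292120820152372577429639704282144754121643875405844107158655799929827349393466335109890189631720222),
  (8804750065920, 484342939483191676451079595709992776447911233631779635262821357117549289975070928987076464215999163041591392093215273788728499071341158069894987530046528378930502179104828215702917116005029300817122972127383588232824063311428085083831510108012293719912240145335201460365551828293052433095097722175838451835000631886879154089303117429407327108214568076038754344570255463871902864732097317553334624999095893004737921829555575870343173865558493171059630344761362256355583501595047496700263071697412142098552658869240788294776180341798777042928354844312921108620751413734457067006669094197826451396275519998122755635374),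
  (18717467475968, 1241772769720425597118660334634714202210169808818694781171972721709194233282313800066350935547334708211979990079515111419449905954072909381272464156247470977955170106294185457131347910123173386649902059530854852212029636590101475173804474647924113457073466731983674315752477171704213921472655028800971125569264755891334122094609274975535382210465007374440139159422431068963045579967393787780124401663678078047081363535710992203502557542250121852294651276332904781987496270225570869142816414028890794945619955563997475160409659608938638652336183623701976443122437656785255629136551853895637774353491118802757170026654),
  (6605659701504, 1304891922078538288704642087146522196493944919403714903679269606675139796464008377720202966579875593463514807458244855017924155535852828647634030989913102761465460217151841070094044507775755919565947081610468039433246263314555327352081831120417408050646448141934588076472138993065424933760197010613981578279944587530718308199225032194546108942815603888029918316307315284856747685474331897286730057133503237559733005631764108014342905706064173585201679294273841169982787371792456575308566078992435851217660060396924989524070267904874525411674183559050143610251378723349453182806193756638964542423262590436602051349150),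
  (4406636511232, 8216439118815939092313639307211255600338921443469064571311702999675818414745792896954136682610577764404073499056244523962948973622572402277211450609989930454909658601167270788025618272414684913502112744092850839011225156319661429161367647274339272906209512343434572642195799879254682129906085914938257039972563938464741486784117426543858323901094016050270045822012761868329115121928208217418382532773530170108504215025589431658122383260225080920004312397105973805140927989643180279894438219666574324825525999366546725794762506339292314221699506723910767699085371197991078005407950195737690355418629871266063733299438),
  (17643792957440, 894617430806583110092979896246007964611299255137798080033070081626351829951064267453110371250417199414517474313724537826990011278445390517906053077056066900142223469454370314804391234990696922173061515654558175162637866696701036640011015238831185502868677577313912095352282998501222006242473053852327161675440689533232567821110810553229972650657819473139433138258912169962547063195043866984329588406829882002979774317268424938938922794802232075150790057343777171378408900046870346312088934456896255980826637050030358831521174842347417794536157910783931100746540174601055787453309478495054520535746665646463297591534),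
  (1116691628032, 1178653617678278472944196169586927607618322089796673449857172302106671638569043005532904456923909146184244154439692217685259971213221652325128358258345669677675122649786924535703508798726542220123158082864408349394246330427615739648110488571791894903598148560471446532594471284611527425246596642223312830192321569059666933774405128691119494845050445768060735006711222615251302853412796060347627205984259907137088684941667166239603996718241450283395212275252538545094058998550746361628260250203301133526308168288918944392707276555025082901413848786730125643144249816168738054421572647812710089211571443810239724460270),
  (2216203124992, 926177006996661510611026829760371490263081678874922903461865488146138110166496062868940278976264485088453554800687242038911287490844142093873369932862205837684985764873198137489371876413950844493867330486245786575863049959837299215889071337293841377805444573524239305435514617826670744987122301077463115860492983388583079371716906340836219657003264031564291495063553979860250437214159056535886269909888523274700494238246321922982532481775815333153631257129540094029864336001456462377942791856273678765987671853850214618018472263049384746404218264305849734066866997122263327424414482857986955185690316487106807216302),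
  (8804750065664, 263425905704412723630222525284750763131806625028336367464507040845416710362386478470281330452579162355135486778808314848035406178357992823676324382745020023230441972002825954772406362806700878236757162060448851807905706986553894405058751354306599269063019855504088062827765054058710007625817891920530875477161989574396087715266668357537627110220162323741582453451277695358009068635977016437659777566261778040705188026405221152654978388953111953733302050986945764149672490075586151637573020221543027515671316610890989233199692070987286686791649008027099040061089234921367546966527637660430943636166014047445986231944),
  (5506148073472, 1147094040981185557505954387033457077299446175810619880203806557137932805156385189317696208457592321838122920492266976402662724774707311316068519016098609728172814243326594758022102894886084406650470965080073840300953685929333168241897774628980818419719169026885117717373138954770739347436410051081716465068635440919843850874242464853070131256715965334293427390839085925178481281282759291980731881152612264564455305985928932887154613525444898778746673789852883843134710400388788261290361707848177699143050147391712967295026099459508438335096675447288297107000027972135944364069573100687354851444299833982433879971998),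
  (6605659701248, 452783363197588875804946596039433857758262505856094495966458238693038086027389974128806451717279234604388792389814322209107104862814827637589638483751235644382333500200428747557978877624711561515783855579562937418653756618497598575356677618021210706433050051203823513707639832701290598605965252750785765866543340250025664529289875011685388286379866649363527759746217686707358823441588623961955994891856433283200127917882978609128102787126454859551680758133891635605480624268660484869387761014978985277464517167242778437673974377165653690858086574074353248934295911717909022695602195314547939558603716414563600221832),
  (2216203190272, 8342677423723213423013099379594841204108099321742814294280495640547801935079250619506078151195453630566941375487837792324820354407298729806196524569624292331626258853896058402978477495105375015740002870105171964298887670835899051772785811674584066450840466274578076188316317475062869756750122741976604525198795316046098973025090771527616922244767281131402010922019950579649004225848152751601341976250633509020264595080443597064842756933334539650633737650967593941199330876292883355627676953007709319992496288617262935320121850028481063231530166793699263170324854632433810178083072003269290151429154183740321108633838),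
  (17643759271936, 579021668295912080564841418571561253680465755428072943785421226172680929925730549598001683074430609262105989168479828295644735230660512782217913229114869260117115574099302032771162467535703223862492838181528884281163946777927693711591023524930680744661547125674056558529561852083692102578302727556031340713656128466083999583943215792948447883811715381557270999417460095625527868871637312339399740965063382534803788721018121067817470613970857352692186947163148707378496754106786043870863148438324669054136437589495737280313256091264363425317558866392916168322707940055017484527552137685506472980376343039850842233070),
  (2216203124736, 294985481953275415677877391023091765841234484038557447375893870758464257298300667801065268879001672003752190668175030262036082860157134303149633979689818013094930803031761965056835213587745139281693947363242854684340883754474135488089213682315052407096294892499728760933482705323888380246143317882315513107647717768453764297624538849923463061140244398985297793967870559552415467626210490810597151276207894538906415494481873877115502950167687879249824374355572112106891603330010034104871854263973398040928832415497111577450454198004509432591351931851471990787348304633221754839450004218214840375060982914669700892296),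
  (17635202891776, 705259973269318739288158374013108329981021344325246479235575743495387425917388354225973649980838430788828991203904577381958704966602076396013099357204695497977617756839423487692660550454681285565998204254867264772559714520774732366314617473247867446995818114770050214759304579741139797027103213657798765849628635340307909616595649449631045098471014963794608620752397951638447149579123872703829340625066016721244944647690213256228482498911309167133360891220997395959749922675617180344708916800454540389611994684236553725207511583421772920074053147115684811034623961285003574909577655108415142493413537238453174999278),
  (8796160262400, 231866329484942103820704185774296599165787533691111961783907918318349466882988834729618513959073564984234705684546462303146021655089414278470439517706703579952604174753613263563272919321867182005382738333006428373190961894437308313686264134023868262435494177652603225058873692205966534267242939740210132134579665467972684835337632759102339672532154050479662467734156963126698809088758396353796751147065929846220493650005392141856165825722040023088455607662018554370525730153823432251301722193923402415068903001684804689776086117123003673323328972697268147855182790723843034412898619377011098865066813666911701968742),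
  (9904261824768, 1841404718676605090608534666689903747681867208283142194366305272103923015054870299608497941523570345337882321617969784195924766433262527137367959430237923706448159353810668409617600916717370626964475538760290029958270810743238213305261999634686148985089250213475512311482182852627344937132953773552414680115443564459214805967635649962997194748738753063791959585711872822227128226156607027392788010478293920332236318730583231752419610621213447782349964397254868682884706397912839853819691791650763481286017331412691510872162771156484374931582993136426985176052932835652400908160087934121152631371235801730601248656158),
  (11012363452672, 1809845142302826563807763991098712928557668700039681054179452723813836169167290135800601607598551979026914766591783499837316398860472140827109518547639213204382309976647240685077012599944219432597147062138282523604923114917447993677716170941558430897119759050261558144374952913303625391073099803368078762625894714486314407169325206336549643762216831545235744783198281392379587329880259519586593575155574681148287678746730761620073987010690142514399183175834917388801807995633107453006344131540939273471664886033226998423483085082619208423363436717810697525560400043782465260951907310626278143078521957281000015301350),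
  (3315714752512, 1494249379770111424914973912187793861924525925954615495461973401622193984425597046691426823414574401762570192695740185950465940717047332113683280159170357441577317125015585227124609833736477414943928898589062326230784165212792863781364334398124797809879072878235163692511615210557741817012345112947251399558908032078916934624244006238166328579707782551589155412924039217649210189629622146786238181117957225806677708952439980186766725393741247111733348519001491390719730244718701372048944410133075936991618922379350442856198357127531553317501106596032531862739318324995449138300518672542475190387002309971689351468822),
  (8796093087744, 74068448227417469118429285228036635786052937178239868911015033719023821747678208681860959842447299987420704734159161414934572878563168344356149812083886715405379184776714761931977586475426307610961700753880419580330672580527612847705766965523646628899302436032809661279170325249656841181362544720297543796081525838499523445186009340374607552753014332936616187728071955879739266490030065627401258958152554804273889258533056372816024626792756306670822452788254278021571885091458528411821191422717147182254109571198997671954506057097702417909572601175425853143319632167138807929362944333669210253530817000631225878878),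
  (9904261758976, 1525808956121846627214602592965592671814970348246331648748377686164315336935934816450550585549988320389373324354101277574596233357060913872715026305210384123934752789713058832705973196090014566490476426744056957488318366996487080146154225816035016426516788042714599916142895762661568841852483794378224890805677378586844172010611197453971431935168454292878406833221566645958000572898223825740731612791721615249630334336029631770501743506640995851796518134825433573228051098526252777494694610598994735720296835781836023817382946454599715345434758108825786618498471523976227665102910861587182730244315693923753181845854)]

/-- Codes of tournaments on seven vertices whose hypergraphs represent the isomorphism classes, in
increasing order of the invariant `invCode`. -/
def reps : List ℕ := [
  0, 4503599627370496, 4503599660924928, 4503633987108864, 4503633987174400, 4503634054217728,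
  2251799880794112, 4503634054348800, 4508032033619968, 1134695999864832, 9020393394274304,
  4503634054349056, 4503616807370752, 2251799880925440, 3382097767038976, 4508032033751040,
  4503616807371008, 9020393394405376, 9033604747231232, 2251799847239936, 4508032033751296,
  1125899906973696, 9029223880589312, 4505833077473280, 9020393394405632, 2251808470728960,
  9027024890888192, 2253998904049664, 9033621994209280, 1134695999995904, 1125899906973952,
  4503625397174528, 9033604747231488, 9029223880589568, 1134696033419520, 9018194438127616,
  2819147813617664, 571746113552384, 1134695999996160, 9583343347695616, 4505833010364672,
  3382097767170048, 2256197893751040, 9020393427828992, 4505833077538816, 9033621994209536,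
  9018194371019008, 1697645953286144, 5070982020595712, 4508032067239936, 2253998904115200,
  4505833077473536, 9029223880654848, 9029198077296640, 2260596007371008, 9033621994274816,
  2256197893816320, 5638330087768064, 5070982054281216, 2253998904049920, 9027024890888448,
  9027007643975680, 9029223914340352, 3382097767170304, 2256197877104640, 4508032100925440,
  2256197927501824, 571746113617920, 1134700328386560, 3386495914344448, 2260596007436288,
  2256202188718080, 2254003199016960, 1134696033484800, 1134696016773120, 2819147813683200,
  9018194438127872, 1143535076114688, 2819147813617920, 567347999997952, 9583343347695872,
  4512438770729216, 3379898743848960, 4508036362141696, 4512421523751168, 4508040657109248,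
  1128098930163712, 9029232470524160, 9033613337166080, 4505820125462528, 9020393461579776,
  2260595990724608, 2269413508120576, 4505824420430080, 2254007493984512, 571750408519680,
  1697645953286400, 562949953421568, 4521251976511744, 1134696067170304, 4512417228783616,
  2269430755098624, 9018203028062464, 9029206667362304, 5070982003818496, 580563614302208,
  2269404951740416, 5075362870460416, 4506923932057600, 2537672837038080, 1126999418601472,
  5070982020595968, 5638330087768320, 571746046443776, 9301868371116032, 4512408672403456,
  2819147830394880, 9583343364472832, 9027016233844992, 1697645953351680, 571754703487232,
  1697645970063360, 4506949735415808, 4522351488139264, 5633931957370880, 5075380117438464,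
  3382097783947264, 564066644918272, 4789507043885056, 580567909269760, 5075362887237888,
  9583343381250304, 1697645986840832, 4793887910526976, 5075380134215936, 3386495897567232,
  5638330070990848, 4787308054183936, 3386495914344704, 3382097767235584, 571746113552640,
  5070982003884032, 9308499867598848, 9301868404539392, 1697650281807872, 2823545944014848,
  4787290807271424, 5070982003949824, 4793905157505024, 3386495863881728, 2819147847172352,
  1130297953550336, 5638308545691648, 1416171010129920, 5638330037305344, 9014904426070016,
  5631732984512768, 2537672870461440, 4521221878185984, 9299669414838272, 2535473880760320,
  5638330037370880, 290271136972800, 4787290807337216, 5638317135757312, 5068783030894848,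
  3395304825028608, 6764208519643136, 5638334382735360, 2823545960792320, 5070982054347008,
  565166156546304, 3386500209311744, 2819147880923392, 285873023352832, 2542070984081408,
  5638308579377152, 9315088313876480, 5638330087833856, 6764230011256832, 3395313415094272,
  2816948857471232, 6773021725425664, 2550892779798528, 290279726776320, 2550910026776576,
  3379898811089152, 5633931974213888, 283691179835392, 299092932558848, 1706480734568704,
  9596563273810176, 4802726953222144, 9592182407168256, 9596558995620096, 9310707447234816,
  853221090263040, 1706485012758784, 3395317709996288, 3395317693284608, 6773038972403712,
  5638308545691904, 9315088313876736, 9592178128978176, 2815857935778048, 5070964807368960,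
  6764230011322368, 4787299397140736, 9596550439239936, 3382097800790272, 288080636411904,
  3395304825028864, 5647138998452480, 5070990593753344, 3386495914410240, 2832367739732224,
  2535482470695168, 6764208519643392, 3395313415094528, 5067674862223616, 6759810406023424,
  11279911331430400, 2832354905161984, 2832363461542144, 6773021725425920, 2832384986710272,
  4788398908768256, 2816953152438528, 11266699978342400, 11279928544722944, 3381002583932928,
  5075358625825024, 5068770078884096, 1980229098733568, 4788424712126464, 13518534151766016,
  11279902741364736, 1693247906971904, 4803826464849920, 11271098091962368, 3383201607319552,
  5084171831607552, 9296379402780672, 846641133256960, 1973640551792640, 13518508348407808,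
  1973627666825216]

/-- The remaining tournaments on seven vertices, up to isomorphism and converse. The hypergraph of
each is isomorphic to that of a member of `reps`; the second component codes the position of that
member (from bit 22 on) and an isomorphism (as octal digits). -/
def extras : List (ℕ × ℕ) := [
  (2260596007370752, 147958888), (4503625397174272, 71964584), (2251799880925184, 50903968),
  (4398046642176, 26621040), (8796160131072, 14038408), (17617955848192, 43398256),
  (8796093022208, 5651592), (8796160262144, 22426736), (17179869184, 5352776),
  (562967133290752, 475673928), (9033613337165824, 172889456), (9020393427828736, 117812128),
  (4512421523750912, 164731568), (2256197893750784, 109423408), (562967133290496, 123352168),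
  (2251808470728704, 63292840), (1416170976706560, 717773041), (1134696033419264, 96811824),
  (1697645986840576, 239906144), (4512438770728960, 152147312), (4521251976511488, 198288296),
  (4503599627436032, 10142787), (8804750065664, 35009648), (6605659701248, 60175472),
  (2216203124736, 39203952)]

lemma extends0 : extendsTo 0 level0 (level1.map Prod.fst) = true := by decide +kernel
lemma extends1 : extendsTo 1 level1 (level2.map Prod.fst) = true := by decide +kernel
lemma extends2 : extendsTo 2 level2 (level3.map Prod.fst) = true := by decide +kernel
lemma extends3 : extendsTo 3 level3 (level4.map Prod.fst) = true := by decide +kernel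
lemma extends4 : extendsTo 4 level4 (level5.map Prod.fst) = true := by decide +kernel
lemma extends5 : extendsTo 5 level5 (level6.map Prod.fst) = true := by decide +kernel
lemma extends6 : extendsTo 6 level6 (reps ++ extras.map Prod.fst) = true := by decide +kernel

lemma covers_seven : Covers 7 (reps ++ extras.map Prod.fst) := by
  have h1 := covers_zero.succ (L := level0) (by norm_num) extends0
  have h2 := h1.succ (by norm_num) extends1
  have h3 := h2.succ (by norm_num) extends2
  have h4 := h3.succ (by norm_num) extends3
  have h5 := h4.succ (by norm_num) extends4
  have h6 := h5.succ (by norm_num) extends5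
  exact h6.succ (by norm_num) extends6

/-! ### Isomorphisms of hypergraphs of cyclic triples -/

/-- Whether the arcs between `a`, `b`, `c` form a directed 3-cycle. -/
def cyc {α : Type} (T : α → α → Bool) (a b c : α) : Bool :=
  (T a b && T b c && T c a) || (T b a && T c b && T a c)

lemma mem_cyclicTriples {n : ℕ} {T : Fin n → Fin n → Bool} {s : Finset (Fin n)} :
    s ∈ cyclicTriples T ↔ IsCyclicTriple T s := by
  simp [cyclicTriples]

lemma mem_cyclicTriples_triple {n : ℕ} {T : Fin n → Fin n → Bool} (hT : IsTournament T)
    (a b c : Fin n) : {a, b, c} ∈ cyclicTriples T ↔ cyc T a b c = true := by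
  rw [mem_cyclicTriples]
  constructor
  · rintro ⟨x, y, z, hxy, hxz, hyz, hs, h⟩
    have hx : x ∈ ({a, b, c} : Finset (Fin n)) := by simp [hs]
    have hy : y ∈ ({a, b, c} : Finset (Fin n)) := by simp [hs]
    have hz : z ∈ ({a, b, c} : Finset (Fin n)) := by simp [hs]
    simp only [Finset.mem_insert, Finset.mem_singleton] at hx hy hz
    rcases hx with rfl | rfl | rfl <;> rcases hy with rfl | rfl | rfl <;>
      rcases hz with rfl | rfl | rfl <;> first | contradiction | (simp only [cyc]; grind)
  · intro h
    have harcs : (T a b = true ∧ T b c = true ∧ T c a = true) ∨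
        (T b a = true ∧ T c b = true ∧ T a c = true) := by
      simpa [cyc, and_assoc] using h
    have h0 := hT.1
    refine ⟨a, b, c, ?_, ?_, ?_, rfl, harcs⟩ <;> rintro rfl <;> simp [h0] at harcs

/-- The hypergraph of cyclic triples of `T`, as an element of `TournamentHG7`. -/
noncomputable def hgOf (T : Fin 7 → Fin 7 → Bool) (hT : IsTournament T) : TournamentHG7 :=
  ⟨cyclicTriples T, T, hT, rfl⟩

lemma iso_of_cyc {T T' : Fin 7 → Fin 7 → Bool} (hT : IsTournament T) (hT' : IsTournament T')
    (σ : Equiv.Perm (Fin 7)) (h : ∀ a b c, cyc T (σ a) (σ b) (σ c) = cyc T' a b c) :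
    IsoTHG7 (hgOf T' hT') (hgOf T hT) := by
  refine ⟨σ, fun s => ?_⟩
  change s ∈ cyclicTriples T' ↔ s.image σ ∈ cyclicTriples T
  by_cases hs : ∃ a b c, s = {a, b, c}
  · obtain ⟨a, b, c, rfl⟩ := hs
    have : ({a, b, c} : Finset (Fin 7)).image σ = {σ a, σ b, σ c} := by
      simp [Finset.image_insert]
    rw [this, mem_cyclicTriples_triple hT, mem_cyclicTriples_triple hT', h]
  · constructor
    · intro h1
      obtain ⟨a, b, c, -, -, -, h1, -⟩ := mem_cyclicTriples.1 h1
      exact absurd ⟨a, b, c, h1⟩ hs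
    · intro h1
      obtain ⟨a, b, c, -, -, -, h1, -⟩ := mem_cyclicTriples.1 h1
      refine absurd ⟨σ.symm a, σ.symm b, σ.symm c, ?_⟩ hs
      apply Finset.image_injective σ.injective
      rw [h1]
      simp [Finset.image_insert]

lemma Sim.iso {T T' : Fin 7 → Fin 7 → Bool} (h : Sim T T') (hT : IsTournament T)
    (hT' : IsTournament T') : IsoTHG7 (hgOf T' hT') (hgOf T hT) := by
  obtain ⟨σ, h | h⟩ := h
  · exact iso_of_cyc hT hT' σ fun a b c => by simp only [cyc, h]
  · refine iso_of_cyc hT hT' σ fun a b c => ?_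
    simp only [cyc, h]
    rw [Bool.or_comm]

/-- Checks that `digit k` is an isomorphism from the hypergraph of the tournament `s` to the
hypergraph of the tournament `r`, on seven vertices. -/
def matchCyc (r k s : ℕ) : Bool :=
  (allLt 7 fun j => Nat.blt (digit k j) 7 && allLt j fun i => !Nat.beq (digit k i) (digit k j)) &&
  allLt 7 fun a => allLt 7 fun b => allLt 7 fun c =>
    cyc (arc r) (digit k a) (digit k b) (digit k c) == cyc (arc s) a b c

lemma iso_of_matchCyc {r k r' : ℕ} (h : matchCyc r k r' = true) :
    IsoTHG7 (hgOf (tour 7 r') (isTournament_tour 7 r'))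
      (hgOf (tour 7 r) (isTournament_tour 7 r)) := by
  simp only [matchCyc, allLt_iff, Bool.and_eq_true, Nat.blt_eq, beq_iff_eq,
    Bool.not_eq_true', beq_false_iff] at h
  obtain ⟨h, h'⟩ := h
  let f : Fin 7 → Fin 7 := fun i => ⟨digit k i, (h i i.2).1⟩
  have hf : Function.Injective f := by
    intro i j hij
    have hij' : digit k i = digit k j := congrArg Fin.val hij
    rcases lt_trichotomy i j with h1 | h1 | h1
    · exact absurd hij' ((h j j.2).2 i h1)
    · exact h1
    · exact absurd hij'.symm ((h i i.2).2 j h1)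
  exact iso_of_cyc _ _ (Equiv.ofBijective f (Finite.injective_iff_bijective.1 hf))
    fun a b c => h' a a.2 b b.2 c c.2

lemma extras_match : (extras.all fun x =>
    match reps[x.2 >>> 22]? with
    | none => false
    | some r' => matchCyc x.1 x.2 r') = true := by
  decide +kernel

/-! ### An invariant separating the hypergraphs -/

/-- The invariant of a symmetric ternary relation `h`: a vertex `a` gets the weight
`∑ b, 2 ^ #{c | h a b c}`, and the products of the weights of the three vertices are summed over all
ordered triples satisfying `h`. -/
def tripleInv (h : Fin 7 → Fin 7 → Fin 7 → Bool) : ℕ :=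
  let w : Fin 7 → ℕ := fun a => ∑ b, 2 ^ ∑ c, bif h a b c then 1 else 0
  ∑ a, ∑ b, ∑ c, bif h a b c then w a * (w b * w c) else 0

lemma tripleInv_eq {h h' : Fin 7 → Fin 7 → Fin 7 → Bool} (σ : Equiv.Perm (Fin 7))
    (hσ : ∀ a b c, h a b c = h' (σ a) (σ b) (σ c)) : tripleInv h = tripleInv h' := by
  have hw : ∀ a, (∑ b, 2 ^ ∑ c, bif h a b c then 1 else 0) =
      ∑ b, 2 ^ ∑ c, bif h' (σ a) b c then 1 else 0 := fun a =>
    Fintype.sum_equiv σ _ _ fun b => congrArg (2 ^ ·) <|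
      Fintype.sum_equiv σ _ _ fun c => by rw [hσ]
  exact Fintype.sum_equiv σ _ _ fun a => Fintype.sum_equiv σ _ _ fun b =>
    Fintype.sum_equiv σ _ _ fun c => by simp only [hw]; rw [hσ]

/-- The invariant `tripleInv` of the relation `{a, b, c} ∈ E`. -/
noncomputable def hgInv (E : Finset (Finset (Fin 7))) : ℕ :=
  tripleInv fun a b c => decide ({a, b, c} ∈ E)

lemma hgInv_eq_of_iso {E F : TournamentHG7} (h : IsoTHG7 E F) : hgInv E.1 = hgInv F.1 := by
  obtain ⟨σ, h⟩ := h
  refine tripleInv_eq σ fun a b c => ?_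
  rw [decide_eq_decide, h]
  simp [Finset.image_insert]

/-- `f 0 + ⋯ + f 6`. -/
def sum7 (f : ℕ → ℕ) : ℕ := f 0 + f 1 + f 2 + f 3 + f 4 + f 5 + f 6

lemma sum7_eq (f : ℕ → ℕ) : sum7 f = ∑ i : Fin 7, f i := by
  simp [sum7, Fin.sum_univ_seven]

/-- The vertex weights of `hgInv` for the hypergraph of the tournament coded by `r`. -/
def weight (r a : ℕ) : ℕ := sum7 fun b => 2 ^ sum7 fun c => bif cyc (arc r) a b c then 1 else 0

/-- The value of `hgInv` at the hypergraph of the tournament coded by `r`. -/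
def invCode (r : ℕ) : ℕ :=
  sum7 fun a => sum7 fun b => sum7 fun c =>
    bif cyc (arc r) a b c then weight r a * (weight r b * weight r c) else 0

lemma hgInv_tour (r : ℕ) : hgInv (hgOf (tour 7 r) (isTournament_tour 7 r)).1 = invCode r := by
  have key : ∀ a b c : Fin 7, decide ({a, b, c} ∈ (hgOf (tour 7 r) (isTournament_tour 7 r)).1) =
      cyc (arc r) a b c := by
    intro a b c
    have := mem_cyclicTriples_triple (isTournament_tour 7 r) a b c
    rw [← Bool.decide_coe (cyc (arc r) a b c), decide_eq_decide]
    exact this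
  simp only [hgInv, tripleInv, invCode, weight, key, sum7_eq]

/-- The values of `invCode` along the list are strictly increasing and at least `b`. -/
def increasing : ℕ → List ℕ → Bool
  | _, [] => true
  | b, r :: l => force (invCode r) fun v => Nat.ble b v && increasing (v + 1) l

lemma of_increasing {l : List ℕ} : ∀ {b : ℕ}, increasing b l = true →
    (∀ r ∈ l, b ≤ invCode r) ∧ l.Pairwise fun r r' => invCode r < invCode r' := by
  induction l with
  | nil => simp
  | cons r l ih =>
    intro b h
    simp only [increasing, force_eq, Bool.and_eq_true, Nat.ble_eq] at h
    obtain ⟨h1, h2⟩ := ih h.2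
    simp only [List.mem_cons, forall_eq_or_imp, List.pairwise_cons]
    exact ⟨⟨h.1, fun r' hr' => h.1.trans (Nat.le_of_succ_le (h1 r' hr'))⟩, h1, h2⟩

lemma reps_increasing : increasing 0 reps = true := by decide +kernel

lemma reps_length : reps.length = 247 := by decide +kernel

/-! ### The count -/

/-- The number of isomorphism classes of 3-uniform hypergraphs on 7 vertices
arising as cyclic triples of a tournament on 7 vertices is exactly 247. -/
theorem card_tournament_hypergraphs_7 : Nat.card (Quot IsoTHG7) = 247 := by
  let cls (i : Fin reps.length) : Quot IsoTHG7 :=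
    Quot.mk _ (hgOf (tour 7 reps[i]) (isTournament_tour 7 _))
  have hinj : Function.Injective cls := by
    intro i j hij
    have h := congrArg
      (Quot.lift (fun E : TournamentHG7 => hgInv E.1) fun _ _ => hgInv_eq_of_iso) hij
    replace h : invCode reps[i] = invCode reps[j] := by
      rw [← hgInv_tour, ← hgInv_tour]; exact h
    have hlt := List.pairwise_iff_get.1 (of_increasing reps_increasing).2
    rcases lt_trichotomy i j with h1 | h1 | h1
    · exact absurd h (hlt i j h1).ne
    · exact h1
    · exact absurd h (hlt j i h1).ne'
  have hmem : ∀ r ∈ reps, ∃ i, cls i = Quot.mk _ (hgOf (tour 7 r) (isTournament_tour 7 r)) := by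
    intro r hr
    obtain ⟨i, hi, rfl⟩ := List.getElem_of_mem hr
    exact ⟨⟨i, hi⟩, rfl⟩
  have hsurj : Function.Surjective cls := by
    rintro ⟨E, T, hT, rfl⟩
    obtain ⟨r, hr, hs⟩ := covers_seven T hT
    have hq : (Quot.mk IsoTHG7 (hgOf (tour 7 r) (isTournament_tour 7 r))) =
        Quot.mk IsoTHG7 (hgOf T hT) := Quot.sound (hs.iso hT (isTournament_tour 7 r))
    rcases List.mem_append.1 hr with hr | hr
    · obtain ⟨i, hi⟩ := hmem r hr
      exact ⟨i, hi.trans hq⟩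
    · obtain ⟨⟨r, k⟩, hx, rfl⟩ := List.mem_map.1 hr
      have h1 := List.all_eq_true.1 extras_match _ hx
      dsimp only at h1
      split at h1
      · simp at h1
      · rename_i r' hr'
        obtain ⟨i, hi⟩ := hmem r' (List.mem_of_getElem? hr')
        exact ⟨i, (hi.trans (Quot.sound (iso_of_matchCyc h1))).trans hq⟩
  rw [← Nat.card_eq_of_bijective cls ⟨hinj, hsurj⟩, Nat.card_fin, reps_length]
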